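/- arXiv:1707.04804 — 4 statements merged into one kernel-verified Lean document; each statement's English description precedes it below -/
import Mathlib

section
/- η₁(e^{πi/3}) = 2π/√3, where η₁ is the quasi-period of the Weierstrass zeta function. -/
noncomputable section
open scoped Real
open Complex

/-- The lattice point `m + nτ` of the lattice `ℤ + ℤτ`. -/
def latPt (τ : ℂ) (p : ℤ × ℤ) : ℂ := (p.1 : ℂ) + (p.2 : ℂ) * τ

/-- The Weierstrass zeta function of the lattice `ℤ + ℤτ`:
`ζ(z|τ) = 1/z + ∑'_{ω ≠ 0} (1/(z-ω) + 1/ω + z/ω²)`. -/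
def wzeta (τ z : ℂ) : ℂ :=
  1 / z + ∑' p : {p : ℤ × ℤ // p ≠ 0},
    (1 / (z - latPt τ p.1) + 1 / latPt τ p.1 + z / (latPt τ p.1) ^ 2)

/-- The quasi-period `η₁(τ) = 2ζ(ω₁/2|τ)`, with `ω₁ = 1`. -/
def eta1 (τ : ℂ) : ℂ := 2 * wzeta τ (1 / 2)

/-- The quasi-period `η₂(τ) = 2ζ(ω₂/2|τ)`, with `ω₂ = τ`. -/
def eta2 (τ : ℂ) : ℂ := 2 * wzeta τ (τ / 2)

/-- The summand of the zeta function at `1/2`. -/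
def zTerm (τ : ℂ) (p : ℤ × ℤ) : ℂ :=
  1 / (1 / 2 - latPt τ p) + 1 / latPt τ p + 1 / 2 / (latPt τ p) ^ 2

theorem latPt_ne (z : UpperHalfPlane) (p : ℤ × ℤ) (hp : p ≠ 0) : latPt z p ≠ 0 := by
  intro h
  have him := congrArg Complex.im h
  have hre := congrArg Complex.re h
  simp [latPt, z.im_ne_zero] at him hre
  simp [him] at hre
  exact hp (Prod.ext hre him)

theorem latPt_ne_half (z : UpperHalfPlane) (p : ℤ × ℤ) : (1 / 2 : ℂ) - latPt z p ≠ 0 := by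
  intro h
  have him := congrArg Complex.im h
  have hre := congrArg Complex.re h
  simp [latPt, z.im_ne_zero] at him hre
  simp [him] at hre
  have h2 : (2 * p.1 : ℤ) = 1 := by
    have : (2 * p.1 : ℝ) = 1 := by linarith
    exact_mod_cast this
  omega

theorem zTerm_eq (z : UpperHalfPlane) (p : ℤ × ℤ) (hp : p ≠ 0) :
    zTerm z p = 1 / 2 * ((latPt z p)⁻¹ * (latPt z p)⁻¹ * (1 - 2 * latPt z p)⁻¹) := by
  have h1 := latPt_ne z p hp
  have h2 := latPt_ne_half z p
  have h3 : 1 - 2 * latPt z p ≠ 0 := fun h => h2 (by linear_combination h / 2)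
  have h4 : (1 / 2 - latPt z p) = (1 - 2 * latPt z p) / 2 := by ring
  rw [zTerm, h4]
  field_simp
  ring

theorem zTerm_summable (z : UpperHalfPlane) : Summable (zTerm z) := by
  rw [← ((finTwoArrowEquiv ℤ).trans (Equiv.prodComm ℤ ℤ)).summable_iff]
  have hA : (fun m : Fin 2 → ℤ => (latPt z (m 1, m 0))⁻¹) =O[Filter.cofinite]
      (fun m => ‖m‖⁻¹) := by
    refine (EisensteinSeries.isBigO_linear_add_const_vec z 0 0).congr_left fun m => ?_
    simp [latPt, add_comm]
  have hB : (fun m : Fin 2 → ℤ => (1 - 2 * latPt z (m 1, m 0))⁻¹) =O[Filter.cofinite]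
      (fun m => ‖m‖⁻¹) := by
    have hinj : Function.Injective (fun m : Fin 2 → ℤ => (-2 : ℤ) • m) :=
      smul_right_injective _ (by norm_num)
    have := (EisensteinSeries.isBigO_linear_add_const_vec z 0 1).comp_tendsto
      hinj.tendsto_cofinite
    refine (this.congr_left fun m => ?_).trans ?_
    · simp [latPt]
      ring
    · refine Asymptotics.IsBigO.of_bound 1 (Filter.Eventually.of_forall fun m => ?_)
      have h2 : ‖(-2 : ℤ) • m‖ = 2 * ‖m‖ := by
        rw [norm_smul, Int.norm_eq_abs]
        norm_num
      simp only [Function.comp_apply, h2, norm_inv, norm_mul, norm_norm, one_mul, mul_inv]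
      have : 0 ≤ ‖m‖⁻¹ := by positivity
      norm_num
      linarith
  have hC : (fun m : Fin 2 → ℤ => 1 / 2 * ((latPt z (m 1, m 0))⁻¹ * (latPt z (m 1, m 0))⁻¹ *
      (1 - 2 * latPt z (m 1, m 0))⁻¹)) =O[Filter.cofinite] (fun m => (‖m‖ ^ (3 : ℝ))⁻¹) := by
    refine (((hA.mul hA).mul hB).const_mul_left _).congr_right fun m => ?_
    rw [show (3 : ℝ) = ((3 : ℕ) : ℝ) by norm_num, Real.rpow_natCast, ← inv_pow]
    ring
  refine EisensteinSeries.summable_of_isBigO_rpow_norm (a := 3) (by norm_num) (hC.congr' ?_ (by rfl))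
  filter_upwards [(Set.finite_singleton (0 : Fin 2 → ℤ)).compl_mem_cofinite] with m hm
  have : (m 1, m 0) ≠ ((0 : ℤ × ℤ)) := by
    intro h
    simp at h
    apply hm
    ext i
    fin_cases i <;> simp [h.1, h.2]
  exact (zTerm_eq z _ this).symm

theorem eta1_eq_tsum (z : UpperHalfPlane) : eta1 z = 2 * ∑' p, zTerm z p := by
  have h := (zTerm_summable z).sum_add_tsum_subtype_compl {0}
  rw [eta1, wzeta, ← h]
  congr 2
  · simp [zTerm, latPt]
  · exact (Equiv.subtypeEquivRight (p := fun x : ℤ × ℤ => x ∉ ({0} : Finset (ℤ × ℤ)))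
      (q := fun x => x ≠ 0) (by simp)).symm.tsum_eq (fun p => zTerm z p.1)

/-- Symmetrised summand. -/
def hTerm (τ : ℂ) (n m : ℤ) : ℂ :=
  ((n * τ + (m + 1) - 1 / 2)⁻¹ - (n * τ + m - 1 / 2)⁻¹) + ((n * τ + m) ^ 2)⁻¹

theorem hTerm_eq (τ : ℂ) (n m : ℤ) : zTerm τ (m, n) + zTerm τ (-(m, n)) = hTerm τ n m := by
  have e0 : latPt τ (m, n) = n * τ + m := by simp [latPt, add_comm]
  have e1 : latPt τ (-(m, n)) = -(n * τ + m) := by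
    simp [latPt]
  rw [zTerm, zTerm, e0, e1, hTerm]
  generalize hw : (n * τ + m : ℂ) = w
  have a1 : 1 / 2 - w = -(w - 1 / 2) := by ring
  have a2 : 1 / 2 - -w = w + 1 / 2 := by ring
  have a3 : (n * τ + (m + 1) - 1 / 2 : ℂ) = n * τ + m + 1 / 2 := by ring
  rw [a3, hw, a1, a2]
  simp only [one_div, inv_neg, div_eq_mul_inv, neg_sq]
  ring

theorem hTerm_summable (z : UpperHalfPlane) :
    Summable (fun p : ℤ × ℤ => hTerm z p.1 p.2) ∧
    eta1 z = ∑' p : ℤ × ℤ, hTerm z p.1 p.2 := by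
  have hs := zTerm_summable z
  have hs' : Summable (fun p => zTerm z (-p)) := (Equiv.neg (ℤ × ℤ)).summable_iff.mpr hs
  have ht : ∑' p, zTerm z (-p) = ∑' p, zTerm z p := (Equiv.neg (ℤ × ℤ)).tsum_eq (zTerm z)
  have key : (fun p : ℤ × ℤ => hTerm z p.1 p.2) ∘ (Equiv.prodComm ℤ ℤ) =
      fun p => zTerm z p + zTerm z (-p) := by
    ext ⟨m, n⟩
    exact (hTerm_eq z n m).symm
  constructor
  · rw [← (Equiv.prodComm ℤ ℤ).summable_iff, key]
    exact hs.add hs'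
  · rw [← (Equiv.prodComm ℤ ℤ).tsum_eq, eta1_eq_tsum]
    calc 2 * ∑' p, zTerm z p = ∑' p, (zTerm z p + zTerm z (-p)) := by
          rw [hs.tsum_add hs', ht]; ring
      _ = _ := tsum_congr fun p => (congrFun key p).symm

open SummationFilter Filter Topology in
theorem tele (z : UpperHalfPlane) (n : ℤ)
    (hs : Summable fun m : ℤ => ((n * (z : ℂ) + (m + 1) - 1 / 2)⁻¹ - (n * (z : ℂ) + m - 1 / 2)⁻¹)) :
    ∑' m : ℤ, ((n * (z : ℂ) + (m + 1) - 1 / 2)⁻¹ - (n * (z : ℂ) + m - 1 / 2)⁻¹) = 0 := by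
  rw [← neg_eq_zero, ← tsum_neg, ← tsum_eq_of_summable_unconditional (L := symmetricIco ℤ) hs.neg]
  apply HasSum.tsum_eq
  rw [hasSum_symmetricIco_int_iff]
  have h0 : ∀ c : ℂ, Tendsto (fun N : ℕ => (c + N)⁻¹) atTop (𝓝 0) := by
    intro c
    refine tendsto_inv₀_cobounded.comp ?_
    exact (tendsto_const_add_cobounded c).comp tendsto_natCast_atTop_cobounded
  have h1 := h0 (n * z - 1 / 2)
  have h2 := (h0 (-(n * z - 1 / 2))).neg
  have h3 := h2.sub h1
  rw [neg_zero, sub_zero] at h3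
  refine h3.congr fun N => ?_
  rw [← inv_neg]
  have := Finset.sum_Ico_int_sub N (fun m : ℤ => (n * (z : ℂ) + m - 1 / 2)⁻¹)
  push_cast at this
  convert this.symm using 1
  · congr 2 <;> ring
  · refine Finset.sum_congr rfl fun m _ => ?_
    ring

open SummationFilter EisensteinSeries in
theorem eta1_eq_G2 (z : UpperHalfPlane) : eta1 z = EisensteinSeries.G2 z := by
  obtain ⟨hs, he⟩ := hTerm_summable z
  have inner : ∀ n : ℤ, ∑' m : ℤ, hTerm z n m = e2Summand n z := by
    intro n
    have a := hs.prod_factor n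
    have b : Summable fun m : ℤ => ((n * (z : ℂ) + m) ^ 2)⁻¹ :=
      (e2Summand_summable n z).congr fun m => by simp [eisSummand]
    have c : Summable fun m : ℤ =>
        ((n * (z : ℂ) + (m + 1) - 1 / 2)⁻¹ - (n * (z : ℂ) + m - 1 / 2)⁻¹) :=
      (a.sub b).congr fun m => by simp [hTerm]
    simp only [hTerm]
    rw [c.tsum_add b, tele z n c, zero_add, e2Summand]
    exact tsum_congr fun m => by simp [eisSummand]
  have hsum : Summable fun n : ℤ => e2Summand n z := hs.prod.congr inner
  rw [he, hs.tsum_prod, EisensteinSeries.G2, tsum_eq_of_summable_unconditional hsum]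
  exact tsum_congr inner

/-- `η₁(e^{πi/3}) = 2π/√3`. -/
theorem stmt_10 :
    eta1 (Complex.exp ((π : ℂ) * Complex.I / 3)) = ((2 * π / Real.sqrt 3 : ℝ) : ℂ) := by
  have hexp : Complex.exp ((π : ℂ) * Complex.I / 3) = 1 / 2 + (Real.sqrt 3 / 2 : ℝ) * Complex.I := by
    rw [show (π : ℂ) * Complex.I / 3 = ((π / 3 : ℝ) : ℂ) * Complex.I by push_cast; ring,
      Complex.exp_mul_I, ← Complex.ofReal_cos, ← Complex.ofReal_sin, Real.cos_pi_div_three,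
      Real.sin_pi_div_three]
    push_cast
    rfl
  have h3 : ((Real.sqrt 3 : ℝ) : ℂ) ^ 2 = 3 := by
    rw [← Complex.ofReal_pow, Real.sq_sqrt (by norm_num)]; norm_num
  have h3' : ((Real.sqrt 3 : ℝ) : ℂ) ≠ 0 := by
    intro h; rw [h] at h3; norm_num at h3
  rw [hexp]
  let z : UpperHalfPlane := ⟨1 / 2 + (Real.sqrt 3 / 2 : ℝ) * Complex.I, by
    simp⟩
  have hz : (z : ℂ) = 1 / 2 + (Real.sqrt 3 / 2 : ℝ) * Complex.I := rfl
  rw [← hz, eta1_eq_G2]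
  have hz2 : (z : ℂ) ^ 2 = z - 1 := by
    rw [hz]; push_cast
    linear_combination (Complex.I ^ 2 / 4) * h3 + 3 / 4 * Complex.I_sq
  have hz0 : (z : ℂ) ≠ 0 := z.ne_zero
  have hS := EisensteinSeries.G2_S_transform z
  have hT := congrFun EisensteinSeries.G2_T_transform (ModularGroup.S • z)
  have hTS : ModularGroup.T • ModularGroup.S • z = z := by
    rw [UpperHalfPlane.modular_T_smul, UpperHalfPlane.modular_S_smul]
    ext
    simp
    field_simp
    linear_combination -hz2
  rw [ModularForm.SL_slash_def] at hT
  beta_reduce at hT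
  rw [hTS] at hT
  have hd : ∀ w : UpperHalfPlane, UpperHalfPlane.denom ModularGroup.T w = 1 := by
    intro w
    rw [ModularGroup.denom_apply]
    simp [ModularGroup.T]
  rw [hd, one_zpow, mul_one] at hT
  rw [← hT] at hS
  field_simp at hS
  rw [hz2] at hS
  have hS' : EisensteinSeries.G2 z * (z - 2) = 2 * π * Complex.I * z := by
    linear_combination hS
  have hfin : EisensteinSeries.G2 z * (Real.sqrt 3 : ℝ) = 2 * π := by
    have hI : Complex.I * (z : ℂ) ≠ 0 := mul_ne_zero Complex.I_ne_zero hz0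
    apply mul_right_cancel₀ hI
    have : (Real.sqrt 3 : ℝ) * (Complex.I * (z : ℂ)) = z - 2 := by
      rw [hz]; push_cast
      linear_combination (Complex.I ^ 2 / 2) * h3 + 3 / 2 * Complex.I_sq
    rw [mul_assoc, this, hS']; ring
  push_cast
  rw [eq_div_iff h3', hfin]
end
end

section
/- If τ = ib with b > 0 (a purely imaginary point of the upper half-plane), then 12 η₂(τ)² - τ² g₂(τ) > 0. -/
noncomputable section
open scoped Real
open Complex

/-- The Weierstrass invariant `g₂(τ) = 60 ∑'_{ω ∈ (ℤ+ℤτ) \ {0}} ω⁻⁴`. -/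
def g2 (τ : ℂ) : ℂ := 60 * ∑' p : {p : ℤ × ℤ // p ≠ 0}, 1 / (latPt τ p.1) ^ 4

open EisensteinSeries UpperHalfPlane Filter SummationFilter ModularGroup
open scoped ArithmeticFunction.sigma Topology

/-- the point `i t` of the upper half plane -/
def itPt (t : ℝ) (ht : 0 < t) : UpperHalfPlane := ⟨Complex.I * t, by simpa using ht⟩

lemma itPt_coe (t : ℝ) (ht : 0 < t) : ((itPt t ht : UpperHalfPlane) : ℂ) = Complex.I * t := rfl

lemma latPt_eis (k : ℕ) (t : ℝ) (ht : 0 < t) (p : ℤ × ℤ) :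
    eisSummand k ![p.2, p.1] (itPt t ht) = 1 / latPt (Complex.I * t) p ^ k := by
  simp [eisSummand, latPt, itPt_coe, add_comm]

lemma latPt_ne_s12 (t : ℝ) (ht : 0 < t) (p : ℤ × ℤ) (hp : p ≠ 0) : latPt (Complex.I * t) p ≠ 0 := by
  intro h
  apply hp
  have h1 := congrArg Complex.re h
  have h2 := congrArg Complex.im h
  simp [latPt] at h1 h2
  ext
  · simpa using h1
  · simpa [ht.ne'] using h2

lemma summable_lat (k : ℕ) (hk : 3 ≤ k) (t : ℝ) (ht : 0 < t) :
    Summable fun p : ℤ × ℤ ↦ 1 / latPt (Complex.I * t) p ^ k := by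
  have := (summable_prod_eisSummand hk (itPt t ht))
  have h2 := (Equiv.prodComm ℤ ℤ).summable_iff.mpr this
  refine h2.congr fun p ↦ ?_
  rw [← latPt_eis k t ht p]
  simp

/-- the summand of the zeta function at `1/2`, including the `p = 0` term. -/
def zf (t : ℝ) (p : ℤ × ℤ) : ℂ :=
  1 / (1 / 2 - latPt (Complex.I * t) p) + 1 / latPt (Complex.I * t) p
    + (1 / 2) / latPt (Complex.I * t) p ^ 2

lemma zf_zero (t : ℝ) : zf t 0 = 2 := by simp [zf, latPt]

lemma half_sub_norm (t : ℝ) (p : ℤ × ℤ) :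
    ‖latPt (Complex.I * t) p‖ / 2 ≤ ‖1 / 2 - latPt (Complex.I * t) p‖ := by
  have h : (‖latPt (Complex.I * t) p‖ / 2) ^ 2 ≤ ‖1 / 2 - latPt (Complex.I * t) p‖ ^ 2 := by
    rw [div_pow, ← Complex.normSq_eq_norm_sq, ← Complex.normSq_eq_norm_sq,
      Complex.normSq_apply, Complex.normSq_apply]
    simp [latPt]
    have : (0 : ℝ) ≤ ((p.1 : ℝ) - 1) * (3 * p.1 - 1) := by
      rcases le_or_gt p.1 0 with h | h
      · have : (p.1 : ℝ) ≤ 0 := by exact_mod_cast h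
        nlinarith
      · have : (1 : ℝ) ≤ p.1 := by exact_mod_cast h
        nlinarith
    nlinarith [mul_self_nonneg ((p.2 : ℝ) * t)]
  exact (pow_le_pow_iff_left₀ (by positivity) (by positivity) two_ne_zero).mp h

lemma half_sub_ne (t : ℝ) (p : ℤ × ℤ) : 1 / 2 - latPt (Complex.I * t) p ≠ 0 := by
  intro h
  have h1 := congrArg Complex.re h
  simp [latPt] at h1
  have h2 : (2 * p.1 : ℝ) = 1 := by linarith
  have h3 : 2 * p.1 = 1 := by exact_mod_cast h2
  omega

lemma summable_zf (t : ℝ) (ht : 0 < t) : Summable (zf t) := by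
  have h1 : Summable fun p : ℤ × ℤ ↦ (if p = 0 then (2 : ℝ) else 0) :=
    summable_of_ne_finset_zero (s := {0}) (by intro b hb; simp at hb; simp [hb])
  have h2 := ((summable_lat 3 le_rfl t ht).norm).mul_left (1 / 2)
  refine Summable.of_norm_bounded (h1.add h2) fun p ↦ ?_
  by_cases hp : p = 0
  · simp [hp, zf_zero, latPt]
  · have hw := latPt_ne_s12 t ht p hp
    have hw2 := half_sub_ne t p
    have hb := half_sub_norm t p
    simp only [hp, if_false, zero_add]
    have e : zf t p = 1 / 4 * (1 / (latPt (Complex.I * t) p ^ 2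
        * (1 / 2 - latPt (Complex.I * t) p))) := by
      rw [zf]
      generalize latPt (Complex.I * t) p = w at *
      have hw3 : 1 - 2 * w ≠ 0 := by
        intro h; apply hw2; linear_combination h / 2
      field_simp
      ring
    rw [e]
    simp only [norm_mul, norm_div, norm_pow, norm_one]
    generalize latPt (Complex.I * t) p = w at *
    have hn : 0 < ‖w‖ := by simpa using hw
    have : 1 / (‖w‖ ^ 2 * ‖1 / 2 - w‖) ≤ 1 / (‖w‖ ^ 2 * (‖w‖ / 2)) := by gcongr
    have e2 : 1 / (‖w‖ ^ 2 * (‖w‖ / 2)) = 2 * (1 / ‖w‖ ^ 3) := by field_simp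
    norm_num at *
    rw [e2] at this
    linarith

lemma tsum_ne_zero {f : ℤ × ℤ → ℂ} (hf : Summable f) :
    ∑' p, f p = f 0 + ∑' p : {p : ℤ × ℤ // p ≠ 0}, f p.1 := by
  have := hf.sum_add_tsum_compl (s := {0})
  rw [← this]
  rw [Finset.sum_singleton]
  congr 1
  let e : {p : ℤ × ℤ // p ≠ 0} ≃ {p : ℤ × ℤ // p ∈ ((({0} : Finset (ℤ × ℤ)) : Set (ℤ × ℤ))ᶜ)} :=
    Equiv.subtypeEquivRight (by intro p; simp)
  exact (e.tsum_eq (fun p ↦ f p.1)).symm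

lemma wzeta_half (t : ℝ) (ht : 0 < t) : wzeta (Complex.I * t) (1 / 2) = ∑' p, zf t p := by
  rw [tsum_ne_zero (summable_zf t ht), wzeta, zf_zero]
  simp [zf]

lemma latPt_neg (τ : ℂ) (p : ℤ × ℤ) : latPt τ (-p) = - latPt τ p := by
  simp [latPt]; ring

lemma telescope (w : ℂ) (hs : Summable fun m : ℤ ↦ (1 / (w + (m + 1)) - 1 / (w + m))) :
    ∑' m : ℤ, (1 / (w + (m + 1)) - 1 / (w + m)) = 0 := by
  rw [← tsum_eq_of_summable_unconditional (L := symmetricIco ℤ) hs]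
  apply HasSum.tsum_eq
  rw [hasSum_symmetricIco_int_iff]
  have (N : ℕ) : ∑ m ∈ Finset.Ico (-N : ℤ) N, (1 / (w + (m + 1)) - 1 / (w + m)) =
      1 / (w + N) - 1 / (w - N) := by
    have := Finset.sum_Ico_int_sub N (fun m ↦ -(1 / (w + m)))
    simp only [sub_neg_eq_add] at this
    rw [show 1 / (w + N) - 1 / (w - N) = -(1 / (w + (-(N : ℤ) : ℤ))) + 1 / (w + (N : ℤ)) by
      push_cast; ring_nf, ← this]
    refine Finset.sum_congr rfl fun m _ ↦ ?_
    push_cast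
    ring
  simp_rw [this]
  simpa using (tendsto_zero_inv_linear w 1).sub (tendsto_zero_inv_linear_sub w 1)

lemma tsum_zf (t : ℝ) (ht : 0 < t) : 2 * ∑' p, zf t p = G2 (itPt t ht) := by
  have hs := summable_zf t ht
  have hs' : Summable fun p ↦ zf t (-p) := (Equiv.neg (ℤ × ℤ)).summable_iff.mpr hs
  have e1 : ∑' p, zf t (-p) = ∑' p, zf t p := (Equiv.neg (ℤ × ℤ)).tsum_eq (zf t)
  have h2 : Summable fun p : ℤ × ℤ ↦ zf t (p.2, p.1) + zf t (-(p.2, p.1)) :=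
    (Equiv.prodComm ℤ ℤ).summable_iff.mpr (hs.add hs')
  have e2 : 2 * ∑' p, zf t p = ∑' p : ℤ × ℤ, (zf t (p.2, p.1) + zf t (-(p.2, p.1))) := by
    rw [two_mul]
    nth_rw 2 [← e1]
    rw [← hs.tsum_add hs']
    exact ((Equiv.prodComm ℤ ℤ).tsum_eq (fun p ↦ zf t p + zf t (-p))).symm
  have inner (n : ℤ) : ∑' m : ℤ, (zf t (m, n) + zf t (-(m, n))) = e2Summand n (itPt t ht) := by
    have hse := e2Summand_summable n (itPt t ht)
    have hsn := h2.prod_factor n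
    have key (m : ℤ) : zf t (m, n) + zf t (-(m, n)) - eisSummand 2 ![n, m] (itPt t ht)
        = 1 / ((n * (Complex.I * t) - 1 / 2) + (m + 1)) - 1 / ((n * (Complex.I * t) - 1 / 2) + m) := by
      have := latPt_eis 2 t ht (m, n)
      simp only [Nat.cast_ofNat] at this
      rw [this, zf, zf, latPt_neg]
      have a1 : n * (Complex.I * t) - 1 / 2 + (m + 1) = 1 / 2 - - latPt (Complex.I * t) (m, n) := by
        simp [latPt]; ring
      have a2 : n * (Complex.I * t) - 1 / 2 + m = - (1 / 2 - latPt (Complex.I * t) (m, n)) := by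
        simp [latPt]; ring
      rw [a1, a2]
      simp only [div_neg, neg_sq]
      ring
    have hd := hsn.sub hse
    have hd2 := hsn.tsum_sub hse
    simp only [key] at hd hd2
    rw [telescope _ hd] at hd2
    exact sub_eq_zero.mp hd2.symm
  rw [e2, h2.tsum_prod, G2]
  have hsum := h2.prod
  simp only [inner] at hsum ⊢
  rw [tsum_eq_of_summable_unconditional (L := symmetricIcc ℤ) hsum]

lemma eta1_eq (t : ℝ) (ht : 0 < t) : eta1 (Complex.I * t) = G2 (itPt t ht) := by
  rw [eta1, wzeta_half t ht, tsum_zf]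

lemma latPt_scale (b : ℝ) (hb : 0 < b) (p : ℤ × ℤ) :
    latPt (Complex.I * b) p =
      (Complex.I * b) * latPt (Complex.I * (b⁻¹ : ℝ)) (p.2, -p.1) := by
  have : (b : ℂ) ≠ 0 := by exact_mod_cast hb.ne'
  simp only [latPt]
  push_cast
  field_simp
  linear_combination (p.1 : ℂ) * Complex.I_sq

/-- rotation of the index set -/
def rotEquiv : {p : ℤ × ℤ // p ≠ 0} ≃ {p : ℤ × ℤ // p ≠ 0} where
  toFun p := ⟨(p.1.2, -p.1.1), fun h ↦ p.2 (by
    simp only [Prod.ext_iff, Prod.fst_zero, Prod.snd_zero] at h ⊢; omega)⟩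
  invFun p := ⟨(-p.1.2, p.1.1), fun h ↦ p.2 (by
    simp only [Prod.ext_iff, Prod.fst_zero, Prod.snd_zero] at h ⊢; omega)⟩
  left_inv p := by simp
  right_inv p := by simp

lemma eta2_scale (b : ℝ) (hb : 0 < b) :
    eta2 (Complex.I * b) = (Complex.I * b)⁻¹ * eta1 (Complex.I * (b⁻¹ : ℝ)) := by
  have hb' : (Complex.I * b : ℂ) ≠ 0 := by simp [hb.ne']
  rw [eta2, eta1, wzeta, wzeta, ← rotEquiv.tsum_eq (fun p ↦
    1 / (1 / 2 - latPt (Complex.I * (b⁻¹ : ℝ)) p.1) + 1 / latPt (Complex.I * (b⁻¹ : ℝ)) p.1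
      + 1 / 2 / (latPt (Complex.I * (b⁻¹ : ℝ)) p.1) ^ 2), mul_left_comm (Complex.I * b : ℂ)⁻¹ 2,
    mul_add (Complex.I * b : ℂ)⁻¹, ← tsum_mul_left]
  congr 2
  · field_simp
  · refine tsum_congr fun p ↦ ?_
    rw [latPt_scale b hb p.1]
    change _ = (Complex.I * b : ℂ)⁻¹ * (1 / (1 / 2 - latPt (Complex.I * (b⁻¹ : ℝ)) (p.1.2, -p.1.1))
      + 1 / latPt (Complex.I * (b⁻¹ : ℝ)) (p.1.2, -p.1.1)
      + 1 / 2 / (latPt (Complex.I * (b⁻¹ : ℝ)) (p.1.2, -p.1.1)) ^ 2)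
    generalize latPt (Complex.I * (b⁻¹ : ℝ)) (p.1.2, -p.1.1) = w
    generalize (Complex.I * b : ℂ) = τ at *
    rw [show τ / 2 - τ * w = τ * (1 / 2 - w) by ring, mul_add, mul_add]
    congr 1
    · congr 1
      · simp [mul_comm]
      · rw [one_div, mul_inv, one_div]
    · rw [mul_pow, div_eq_mul_inv, mul_inv, div_eq_mul_inv (1 / 2) (w ^ 2)]
      field_simp

lemma g2_scale (b : ℝ) (hb : 0 < b) :
    g2 (Complex.I * b) = ((Complex.I * b) ^ 4)⁻¹ * g2 (Complex.I * (b⁻¹ : ℝ)) := by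
  rw [g2, g2, ← rotEquiv.tsum_eq (fun p ↦ 1 / latPt (Complex.I * (b⁻¹ : ℝ)) p.1 ^ 4),
    mul_left_comm ((Complex.I * b : ℂ) ^ 4)⁻¹ 60, ← tsum_mul_left (a := ((Complex.I * b : ℂ) ^ 4)⁻¹)]
  congr 1
  refine tsum_congr fun p ↦ ?_
  rw [latPt_scale b hb p.1, mul_pow, one_div, mul_inv, one_div]
  rfl

lemma cexp_it (t : ℝ) (ht : 0 < t) :
    cexp (2 * π * Complex.I * (itPt t ht : UpperHalfPlane)) = ((Real.exp (-(2 * π * t)) : ℝ) : ℂ) := by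
  rw [itPt_coe, Complex.ofReal_exp]
  congr 1
  push_cast
  linear_combination (2 * π * t : ℂ) * Complex.I_sq

/-- real divisor-power series -/
def sigSer (k : ℕ) (t : ℝ) : ℝ := ∑' n : ℕ+, (σ k n : ℝ) * Real.exp (-(2 * π * t)) ^ (n : ℕ)

lemma sig_summable (k : ℕ) (t : ℝ) (ht : 0 < t) :
    Summable fun n : ℕ+ ↦ (σ k n : ℝ) * Real.exp (-(2 * π * t)) ^ (n : ℕ) := by
  have h := EisensteinSeries.summable_sigma_mul_cexp_pow (k := k + 1) (by omega) (itPt t ht)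
  rw [cexp_it] at h
  have h2 : Summable fun n : ℕ ↦ (σ k n : ℝ) * Real.exp (-(2 * π * t)) ^ (n : ℕ) := by
    rw [← Complex.summable_ofReal]
    refine h.congr fun n ↦ ?_
    simp
  exact h2.comp_injective PNat.coe_injective

lemma sig_cast (k : ℕ) (t : ℝ) (ht : 0 < t) :
    ∑' n : ℕ+, (σ k n : ℂ) * cexp (2 * π * Complex.I * (itPt t ht : UpperHalfPlane)) ^ (n : ℕ)
      = (sigSer k t : ℂ) := by
  rw [cexp_it, sigSer, Complex.ofReal_tsum]
  refine tsum_congr fun n ↦ ?_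
  push_cast
  rfl

lemma sigSer_pos (k : ℕ) (t : ℝ) (ht : 0 < t) : 0 < sigSer k t := by
  refine (sig_summable k t ht).tsum_pos (fun n ↦ by positivity) 1 ?_
  simp
  positivity

lemma sigSer_anti (k : ℕ) (s t : ℝ) (hs : 0 < s) (hst : s ≤ t) : sigSer k t ≤ sigSer k s := by
  refine (sig_summable k t (hs.trans_le hst)).tsum_le_tsum (fun n ↦ ?_) (sig_summable k s hs)
  gcongr

lemma G2_it (t : ℝ) (ht : 0 < t) :
    G2 (itPt t ht) = ((π ^ 2 / 3 - 8 * π ^ 2 * sigSer 1 t : ℝ) : ℂ) := by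
  rw [G2_eq_tsum_cexp, sig_cast, riemannZeta_two]
  push_cast
  ring

lemma g2_it (t : ℝ) (ht : 0 < t) :
    g2 (Complex.I * t) = ((4 * π ^ 4 / 3 + 320 * π ^ 4 * sigSer 3 t : ℝ) : ℂ) := by
  have h0 := tsum_ne_zero (summable_lat 4 (by norm_num) t ht)
  have h := tsum_eisSummand_eq_tsum_sigma_mul_cexp_pow (k := 4) (by norm_num) (by decide) (itPt t ht)
  simp only [Nat.add_one_sub_one] at h
  rw [sig_cast, ← (finTwoArrowEquiv ℤ).symm.tsum_eq, ← (Equiv.prodComm ℤ ℤ).tsum_eq] at h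
  have e : ∑' c : ℤ × ℤ, eisSummand (4 : ℕ) ((finTwoArrowEquiv ℤ).symm ((Equiv.prodComm ℤ ℤ) c)) (itPt t ht)
      = ∑' p : ℤ × ℤ, 1 / latPt (Complex.I * t) p ^ 4 :=
    tsum_congr fun p ↦ latPt_eis 4 t ht p
  rw [e, h0] at h
  have z : 1 / latPt (Complex.I * t) 0 ^ 4 = 0 := by simp [latPt]
  rw [z, zero_add] at h
  rw [g2, h]
  norm_num [riemannZeta_four, Nat.factorial]
  ring_nf
  simp [Complex.I_pow_four]
  try ring

lemma S_it (t : ℝ) (ht : 0 < t) : ModularGroup.S • itPt t ht = itPt t⁻¹ (inv_pos.mpr ht) := by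
  rw [UpperHalfPlane.modular_S_smul]
  apply UpperHalfPlane.ext
  simp [itPt, mul_comm]

lemma G2_S (t : ℝ) (ht : 0 < t) : G2 (itPt t⁻¹ (inv_pos.mpr ht)) =
    -(t : ℂ) ^ 2 * G2 (itPt t ht) + 2 * π * t := by
  have h := G2_S_transform (itPt t ht)
  rw [S_it, itPt_coe] at h
  rw [h]
  have : (t : ℂ) ≠ 0 := by exact_mod_cast ht.ne'
  field_simp
  rw [Complex.I_sq]
  ring

lemma G2_bounds (t : ℝ) (ht : 1 ≤ t) :
    π ≤ π ^ 2 / 3 - 8 * π ^ 2 * sigSer 1 t ∧ π ^ 2 / 3 - 8 * π ^ 2 * sigSer 1 t < π ^ 2 / 3 := by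
  have h1 := sigSer_anti 1 1 t one_pos ht
  have h2 := sigSer_pos 1 t (by linarith)
  have h3 := G2_S 1 one_pos
  have h4 : itPt (1 : ℝ)⁻¹ (inv_pos.mpr one_pos) = itPt 1 one_pos := by
    apply UpperHalfPlane.ext; simp [itPt]
  rw [h4, G2_it] at h3
  have h5 : (π ^ 2 / 3 - 8 * π ^ 2 * sigSer 1 1 : ℝ)
    = -(1 : ℝ) ^ 2 * (π ^ 2 / 3 - 8 * π ^ 2 * sigSer 1 1 : ℝ) + 2 * π * 1 := by exact_mod_cast h3
  have hp := Real.pi_pos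
  have : 0 < 8 * π ^ 2 := by positivity
  constructor
  · nlinarith
  · nlinarith

theorem stmt_12 (b : ℝ) (hb : 0 < b) :
    (12 * eta2 (Complex.I * b) ^ 2 - (Complex.I * b) ^ 2 * g2 (Complex.I * b)).im = 0 ∧
      0 < (12 * eta2 (Complex.I * b) ^ 2 - (Complex.I * b) ^ 2 * g2 (Complex.I * b)).re := by
  have hb' : (b : ℂ) ≠ 0 := by exact_mod_cast hb.ne'
  have hp := Real.pi_pos
  have hp3 := Real.pi_gt_three
  have hI4 : Complex.I ^ 4 = 1 := Complex.I_pow_four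
  suffices h : ∃ x : ℝ, 0 < x ∧
      12 * eta2 (Complex.I * b) ^ 2 - (Complex.I * b) ^ 2 * g2 (Complex.I * b) = (x : ℂ) by
    obtain ⟨x, hx, h⟩ := h
    rw [h]
    exact ⟨Complex.ofReal_im x, by simpa using hx⟩
  rcases le_total 1 b with h1 | h1
  · obtain ⟨l, u⟩ := G2_bounds b h1
    have hs := sigSer_pos 3 b hb
    rw [eta2_scale b hb, eta1_eq _ (inv_pos.mpr hb), G2_S b hb, G2_it, g2_it b hb]
    set G := π ^ 2 / 3 - 8 * π ^ 2 * sigSer 1 b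
    refine ⟨b ^ 2 * (4 * π ^ 4 / 3 + 320 * π ^ 4 * sigSer 3 b) - 12 * (b * G - 2 * π) ^ 2, ?_, ?_⟩
    · have e1 : (b * G - 2 * π) ^ 2 < (b * (π ^ 2 / 3)) ^ 2 := by
        apply sq_lt_sq'
        · nlinarith
        · nlinarith
      have e2 : 0 < b ^ 2 * (320 * π ^ 4 * sigSer 3 b) := by positivity
      nlinarith
    · push_cast
      field_simp
      rw [Complex.I_sq]
      ring_nf
      try simp [hI4]
      try ring
  · have h2 : 1 ≤ b⁻¹ := (one_le_inv₀ hb).mpr h1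
    have hs := sigSer_pos 3 b⁻¹ (inv_pos.mpr hb)
    obtain ⟨l, u⟩ := G2_bounds b⁻¹ h2
    rw [eta2_scale b hb, g2_scale b hb, eta1_eq _ (inv_pos.mpr hb), G2_it,
      g2_it _ (inv_pos.mpr hb)]
    set G := π ^ 2 / 3 - 8 * π ^ 2 * sigSer 1 b⁻¹
    refine ⟨(b ^ 2)⁻¹ * ((4 * π ^ 4 / 3 + 320 * π ^ 4 * sigSer 3 b⁻¹) - 12 * G ^ 2), ?_, ?_⟩
    · have e1 : G ^ 2 < (π ^ 2 / 3) ^ 2 := by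
        apply sq_lt_sq'
        · nlinarith
        · nlinarith
      have e2 : 0 < 320 * π ^ 4 * sigSer 3 b⁻¹ := by positivity
      apply mul_pos (by positivity)
      nlinarith
    · push_cast
      field_simp
      rw [Complex.I_sq]
      ring
end
end

section
/- For τ = ib with b > 0, one has g₂(τ) - 12η₁(τ)² > 0. -/
noncomputable section
open scoped Real
open Complex

open UpperHalfPlane hiding I
open EisensteinSeries Filter Topology Asymptotics SummationFilter

/-- `f(ω)` : the summand of zeta at 1/2 -/
def fz (w : ℂ) : ℂ := 1 / (1 / 2 - w) + 1 / w + (1 / 2) / w ^ 2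

lemma fz_zero : fz 0 = 2 := by simp [fz]

lemma theta_aux (z : ℍ) :
    (fun m : (Fin 2 → ℤ) => (1 / 2 - ((m 0 : ℂ) * z + m 1))⁻¹) =O[cofinite] (fun m => ‖m‖⁻¹) := by
  have h1 : (fun m : (Fin 2 → ℤ) => ((m 0 : ℂ) * z + m 1)⁻¹) =O[cofinite] (fun m => ‖m‖⁻¹) := by
    simpa using isBigO_linear_add_const_vec z 0 0
  have h2 : (fun m : (Fin 2 → ℤ) => ‖m‖) =O[cofinite] (fun m => ((m 0 : ℂ) * z + m 1)) := by
    have := h1.inv_rev (by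
      filter_upwards [eventually_cofinite_ne (0 : Fin 2 → ℤ)] with m hm h
      rw [inv_eq_zero] at h
      exfalso
      apply hm
      have him := congrArg Complex.im h
      have hre := congrArg Complex.re h
      simp [z.im_ne_zero] at him
      simp [him] at hre
      ext i; fin_cases i <;> simp [him, hre])
    simpa using this
  have h3 : (fun _ : Fin 2 → ℤ => (1 / 2 : ℂ)) =o[cofinite]
      (fun m : Fin 2 → ℤ => ((m 0 : ℂ) * z + m 1)) := by
    refine IsLittleO.trans_isBigO ?_ h2
    rw [isLittleO_const_left]
    right
    simpa [Function.comp_def] using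
      tendsto_norm_comp_cofinite_atTop_of_isClosedEmbedding
        (Topology.IsClosedEmbedding.id (X := Fin 2 → ℤ))
  have h4 : (fun m : Fin 2 → ℤ => ((m 0 : ℂ) * z + m 1) - 1 / 2) =Θ[cofinite]
      (fun m : Fin 2 → ℤ => ((m 0 : ℂ) * z + m 1)) := by
    have h := (isTheta_refl (fun m : Fin 2 → ℤ => ((m 0 : ℂ) * z + m 1)) cofinite).add_isLittleO
      h3.neg_left
    refine IsTheta.trans (EventuallyEq.isTheta (Eventually.of_forall fun m => ?_)) h
    simp [sub_eq_add_neg]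
  have h5 := (h4.inv.isBigO.trans h1).neg_left
  refine h5.congr_left fun m => ?_
  rw [← inv_neg, neg_sub]

lemma half_ne (z : ℍ) (m n : ℤ) : (1 / 2 : ℂ) - (m * z + n) ≠ 0 := by
  intro h
  have him := congrArg Complex.im h
  have hre := congrArg Complex.re h
  simp [z.im_ne_zero] at him
  simp [him] at hre
  have : (1 : ℝ) = 2 * n := by linarith
  have : (1 : ℤ) = 2 * n := by exact_mod_cast this
  omega

lemma lin_ne (z : ℍ) (m n : ℤ) (h : ¬ (m = 0 ∧ n = 0)) : ((m : ℂ) * z + n) ≠ 0 := by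
  intro h'
  have him := congrArg Complex.im h'
  have hre := congrArg Complex.re h'
  simp [z.im_ne_zero] at him
  simp [him] at hre
  exact h ⟨him, hre⟩

lemma fz_summable (z : ℍ) : Summable fun m : Fin 2 → ℤ => fz ((m 0 : ℂ) * z + m 1) := by
  have H : Summable fun m : Fin 2 → ℤ =>
      (1 / 4 : ℂ) * ((1 / 2 - ((m 0 : ℂ) * z + m 1))⁻¹ * ((m 0 : ℂ) * z + m 1)⁻¹ *
        ((m 0 : ℂ) * z + m 1)⁻¹) := by
    apply Summable.mul_left
    apply summable_of_isBigO_rpow_norm (a := 3) (by norm_num)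
    have h1 : (fun m : (Fin 2 → ℤ) => ((m 0 : ℂ) * z + m 1)⁻¹) =O[cofinite] (fun m => ‖m‖⁻¹) := by
      simpa using isBigO_linear_add_const_vec z 0 0
    refine (((theta_aux z).mul h1).mul h1).congr_right fun m => ?_
    rw [show (3 : ℝ) = ((3 : ℕ) : ℝ) by norm_num, Real.rpow_natCast, ← inv_pow]
    ring
  refine H.congr_cofinite ?_
  filter_upwards [eventually_cofinite_ne (0 : Fin 2 → ℤ)] with m hm
  have h1 := half_ne z (m 0) (m 1)
  have h2 := lin_ne z (m 0) (m 1) (by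
    rintro ⟨h, h'⟩; apply hm; ext i; fin_cases i <;> simp [h, h'])
  generalize (m 0 : ℂ) * z + m 1 = w at *
  have h3 : 1 - 2 * w ≠ 0 := by
    intro h; apply h1; linear_combination h / 2
  rw [fz]
  field_simp
  ring

lemma fz_summable_prod (z : ℍ) :
    Summable fun p : ℤ × ℤ => fz ((p.1 : ℂ) * z + p.2) := by
  simpa [Function.comp_def] using (finTwoArrowEquiv ℤ).symm.summable_iff.mpr (fz_summable z)

/-- symmetrized summand -/
def hz (w : ℂ) : ℂ := fz w + fz (-w)

lemma hz_eq (w : ℂ) : hz w = (1 / (w + 1 / 2) - 1 / (w - 1 / 2)) + 1 / w ^ 2 := by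
  have : 1 / (1 / 2 - w) = - (1 / (w - 1 / 2)) := by
    rw [← neg_sub, div_neg]
  rw [hz, fz, fz, this]
  have : 1 / (1 / 2 - -w) = 1 / (w + 1 / 2) := by congr 1; ring
  rw [this, div_neg, neg_sq]
  ring

lemma hz_summable_prod (z : ℍ) :
    Summable fun p : ℤ × ℤ => hz ((p.1 : ℂ) * z + p.2) := by
  have h := fz_summable_prod z
  have h' := (Equiv.neg (ℤ × ℤ)).summable_iff.mpr h
  refine (h.add h').congr fun p => ?_
  simp only [hz, Function.comp_apply, Equiv.neg_apply, Prod.fst_neg, Prod.snd_neg, Int.cast_neg]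
  congr 2; ring

lemma tsum_hz (z : ℍ) :
    ∑' p : ℤ × ℤ, hz ((p.1 : ℂ) * z + p.2) = 2 * ∑' p : ℤ × ℤ, fz ((p.1 : ℂ) * z + p.2) := by
  have h := fz_summable_prod z
  have h' := (Equiv.neg (ℤ × ℤ)).summable_iff.mpr h
  have e := (Equiv.neg (ℤ × ℤ)).tsum_eq (fun p : ℤ × ℤ => fz ((p.1 : ℂ) * z + p.2))
  rw [two_mul]
  nth_rewrite 2 [← e]
  refine Eq.trans (tsum_congr fun p => ?_) (h.tsum_add h')
  simp only [hz, Function.comp_apply, Equiv.neg_apply, Prod.fst_neg, Prod.snd_neg, Int.cast_neg]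
  congr 2; ring

lemma inv_tendsto (c : ℂ) : Tendsto (fun d : ℕ => 1 / ((d : ℂ) + c)) atTop (𝓝 0) := by
  simp_rw [one_div]
  refine tendsto_inv₀_cobounded.comp ?_
  exact (tendsto_add_const_cobounded c).comp (tendsto_norm_atTop_iff_cobounded.mp (by simpa using tendsto_natCast_atTop_atTop (R := ℝ)))

lemma row_zero (c : ℂ)
    (hs : Summable fun n : ℤ => (1 / (c + n + 1 / 2) - 1 / (c + n - 1 / 2))) :
    ∑' n : ℤ, (1 / (c + n + 1 / 2) - 1 / (c + n - 1 / 2)) = 0 := by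
  rw [← tsum_eq_of_summable_unconditional (L := symmetricIco ℤ) hs]
  apply HasSum.tsum_eq
  rw [hasSum_symmetricIco_int_iff]
  have key : ∀ N : ℕ, ∑ n ∈ Finset.Ico (-N : ℤ) N,
      (1 / (c + n + 1 / 2) - 1 / (c + n - 1 / 2)) =
      1 / (N + (c - 1 / 2)) + 1 / (N + (1 / 2 - c)) := by
    intro N
    have e2 : (1 : ℂ) / (N + (1 / 2 - c)) = - (1 / (c + (-N : ℤ) - 1 / 2)) := by
      rw [← div_neg]; congr 1; push_cast; ring
    rw [e2]
    induction N with
    | zero => simp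
    | succ k ih =>
      have e3 : Finset.Ico (-(k + 1 : ℕ) : ℤ) (k + 1 : ℕ) =
          insert (-(k + 1 : ℤ)) (insert (k : ℤ) (Finset.Ico (-k : ℤ) k)) := by
        ext x; simp only [Finset.mem_insert, Finset.mem_Ico]; push_cast; omega
      rw [e3, Finset.sum_insert (by simp), Finset.sum_insert (by simp),
        ih (by rw [← div_neg]; congr 1; push_cast; ring)]
      push_cast
      rw [show c + -((k : ℂ) + 1) + 1 / 2 = c + -k - 1 / 2 by ring,
        show (k : ℂ) + 1 + (c - 1 / 2) = c + k + 1 / 2 by ring,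
        show (k : ℂ) + (c - 1 / 2) = c + k - 1 / 2 by ring]
      ring
  simp_rw [key]
  simpa using (inv_tendsto (c - 1 / 2)).add (inv_tendsto (1 / 2 - c))

lemma row_eq (z : ℍ) (m : ℤ) : ∑' n : ℤ, hz ((m : ℂ) * z + n) = e2Summand m z := by
  have h1 : Summable fun n : ℤ => hz ((m : ℂ) * z + n) := (hz_summable_prod z).prod_factor m
  have h2 : Summable fun n : ℤ => 1 / ((m : ℂ) * z + n) ^ 2 := by
    refine (e2Summand_summable m z).congr fun n => ?_
    simp [eisSummand]
    try norm_cast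
  have h3 : Summable fun n : ℤ =>
      (1 / ((m : ℂ) * z + n + 1 / 2) - 1 / ((m : ℂ) * z + n - 1 / 2)) := by
    refine (h1.sub h2).congr fun n => ?_
    rw [hz_eq]; ring
  simp_rw [hz_eq]
  rw [h3.tsum_add h2, row_zero _ h3, zero_add, e2Summand]
  refine tsum_congr fun n => ?_
  simp [eisSummand]
  try norm_cast

lemma tsum_hz_eq_G2 (z : ℍ) : ∑' p : ℤ × ℤ, hz ((p.1 : ℂ) * z + p.2) = G2 z := by
  have hs := (hz_summable_prod z).prod
  rw [Summable.tsum_prod (hz_summable_prod z), G2,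
    ← tsum_eq_of_summable_unconditional (L := symmetricIcc ℤ) hs]
  simp_rw [row_eq]

lemma tsum_ne_zero_add {f : ℤ × ℤ → ℂ} (hf : Summable f) :
    ∑' p, f p = f 0 + ∑' p : {p : ℤ × ℤ // p ≠ 0}, f p := by
  have h := hf.tsum_subtype_add_tsum_subtype_compl ({0} : Set (ℤ × ℤ))
  rw [← h]
  congr 1
  simp

lemma eta1_eq_s13 (z : ℍ) : eta1 z = G2 z := by
  rw [← tsum_hz_eq_G2, tsum_hz, eta1, wzeta]
  have hs := (Equiv.prodComm ℤ ℤ).summable_iff.mpr (fz_summable_prod z)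
  have e := (Equiv.prodComm ℤ ℤ).tsum_eq (fun p : ℤ × ℤ => fz ((p.1 : ℂ) * z + p.2))
  rw [← e]
  erw [tsum_ne_zero_add hs]
  congr 2
  · simp [fz_zero]
  · refine tsum_congr fun p => ?_
    simp [fz, latPt, add_comm]

lemma g2_eq_prod (z : ℍ) : g2 z = 60 * ∑' p : ℤ × ℤ, 1 / (latPt z p) ^ 4 := by
  have hs : Summable fun p : ℤ × ℤ => 1 / (latPt z p) ^ 4 := by
    refine ((Equiv.prodComm ℤ ℤ).summable_iff.mpr
      (summable_prod_eisSummand (k := 4) (by norm_num) z)).congr fun p => ?_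
    simp [eisSummand, latPt, add_comm]
    try norm_cast
  rw [g2, tsum_ne_zero_add hs]
  simp [latPt]

lemma g2_eq_eis (z : ℍ) : g2 z = 60 * ∑' v, eisSummand 4 v z := by
  rw [g2_eq_prod, ← ((finTwoArrowEquiv ℤ).trans (Equiv.prodComm ℤ ℤ)).tsum_eq]
  congr 1
  refine tsum_congr fun v => ?_
  simp [eisSummand, latPt, add_comm]
  try norm_cast

/-- the point `ib` of the upper half plane -/
def pt (b : ℝ) (hb : 0 < b) : ℍ := ⟨Complex.I * b, by simpa using hb⟩

lemma pt_coe (b : ℝ) (hb : 0 < b) : ((pt b hb : ℍ) : ℂ) = Complex.I * b := rfl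

lemma sigma_sum (k : ℕ) (b : ℝ) (hb : 0 < b) : ∃ s : ℝ, 0 < s ∧
    ∑' n : ℕ+, (ArithmeticFunction.sigma k n : ℂ) *
      cexp (2 * π * Complex.I * (pt b hb : ℍ)) ^ (n : ℕ) = s := by
  have hq : cexp (2 * π * Complex.I * (pt b hb : ℍ)) = (Real.exp (-(2 * π * b)) : ℝ) := by
    rw [pt_coe]; push_cast; congr 1
    linear_combination (2 * π * b : ℂ) * Complex.I_mul_I
  have hsum := summable_sigma_mul_cexp_pow (k := k + 1) (by omega) (pt b hb)
  rw [hq] at *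
  refine ⟨∑' n : ℕ+, (ArithmeticFunction.sigma k n : ℝ) * Real.exp (-(2 * π * b)) ^ (n : ℕ), ?_, ?_⟩
  · have hs' : Summable fun n : ℕ =>
        (ArithmeticFunction.sigma k n : ℝ) * Real.exp (-(2 * π * b)) ^ n := by
      rw [← Complex.summable_ofReal]
      simpa using hsum
    have hs2 := hs'.comp_injective PNat.coe_injective
    refine Summable.tsum_pos hs2 (fun n => by positivity) 1 ?_
    simp
    positivity
  · push_cast
    rfl

lemma G2_real (b : ℝ) (hb : 0 < b) : ∃ x : ℝ, x < π ^ 2 / 3 ∧ G2 (pt b hb) = x := by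
  obtain ⟨s, hs, h⟩ := sigma_sum 1 b hb
  refine ⟨π ^ 2 / 3 - 8 * π ^ 2 * s, ?_, ?_⟩
  · have : 0 < 8 * π ^ 2 * s := by positivity
    linarith
  · rw [G2_eq_tsum_cexp, riemannZeta_two]
    erw [h]
    push_cast; ring

lemma g2_real (b : ℝ) (hb : 0 < b) : ∃ x : ℝ, 12 * (π ^ 2 / 3) ^ 2 < x ∧ g2 (pt b hb) = x := by
  obtain ⟨s, hs, h⟩ := sigma_sum 3 b hb
  refine ⟨60 * (2 * (π ^ 4 / 90) + 2 * ((2 * π) ^ 4 / 6) * s), ?_, ?_⟩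
  · have : 0 < π ^ 4 * s := by positivity
    nlinarith
  · have := tsum_eisSummand_eq_tsum_sigma_mul_cexp_pow (k := 4) (by norm_num) (by decide) (pt b hb)
    rw [g2_eq_eis]
    push_cast at this
    rw [this, riemannZeta_four]
    rw [h]
    have hI : Complex.I ^ 4 = 1 := Complex.I_pow_four
    rw [mul_pow, hI, show Nat.factorial 3 = 6 from rfl]
    push_cast
    ring

lemma g2_inv (b : ℝ) (hb : 0 < b) :
    g2 (pt b hb) = (b⁻¹ : ℂ) ^ 4 * g2 (pt b⁻¹ (inv_pos.mpr hb)) := by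
  have hb' : (b : ℂ) ≠ 0 := by exact_mod_cast hb.ne'
  rw [g2_eq_prod, g2_eq_prod, mul_left_comm]
  congr 1
  rw [← tsum_mul_left]
  rw [← ((Equiv.prodComm ℤ ℤ).trans ((Equiv.neg ℤ).prodCongr (Equiv.refl ℤ))).tsum_eq
    (fun p : ℤ × ℤ => 1 / latPt (pt b hb) p ^ 4)]
  refine tsum_congr fun p => ?_
  have : latPt (pt b hb) (((Equiv.prodComm ℤ ℤ).trans ((Equiv.neg ℤ).prodCongr (Equiv.refl ℤ))) p)
      = Complex.I * b * latPt (pt b⁻¹ (inv_pos.mpr hb)) p := by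
    simp [latPt, pt_coe]
    field_simp
    linear_combination (-(p.2 : ℂ)) * Complex.I_sq
  rw [this, mul_pow, mul_pow, Complex.I_pow_four]
  field_simp

lemma G2_inv (b : ℝ) (hb : 0 < b) :
    G2 (pt b hb) = -(b⁻¹ : ℂ) ^ 2 * G2 (pt b⁻¹ (inv_pos.mpr hb)) + 2 * π / b := by
  have hb' : (b : ℂ) ≠ 0 := by exact_mod_cast hb.ne'
  have hS : ModularGroup.S • pt b hb = pt b⁻¹ (inv_pos.mpr hb) := by
    rw [UpperHalfPlane.modular_S_smul]
    ext
    simp [pt_coe, mul_comm]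
  rw [G2_S_transform, hS, pt_coe, mul_pow, Complex.I_sq]
  field_simp
  ring

/-- For `τ = ib` with `b > 0`, the quantity `g₂(τ) - 12 η₁(τ)²` is real and positive. -/
theorem stmt_13 (b : ℝ) (hb : 0 < b) :
    (g2 (Complex.I * b) - 12 * eta1 (Complex.I * b) ^ 2).im = 0 ∧
      0 < (g2 (Complex.I * b) - 12 * eta1 (Complex.I * b) ^ 2).re := by
  have hbi := inv_pos.mpr hb
  obtain ⟨x, hx, ex⟩ := G2_real b hb
  obtain ⟨y, hy, ey⟩ := G2_real b⁻¹ hbi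
  obtain ⟨u, hu, eu⟩ := g2_real b hb
  obtain ⟨v, hv, ev⟩ := g2_real b⁻¹ hbi
  have h1 : x = -(b⁻¹) ^ 2 * y + 2 * π / b := by
    have := G2_inv b hb
    rw [ex, ey] at this
    exact_mod_cast this
  have h2 : u = (b⁻¹) ^ 4 * v := by
    have := g2_inv b hb
    rw [eu, ev] at this
    exact_mod_cast this
  rw [← pt_coe b hb, eta1_eq_s13, ex, eu]
  have hmain : 0 < u - 12 * x ^ 2 := by
    by_cases hx0 : 0 ≤ x
    · have : x ^ 2 ≤ (π ^ 2 / 3) ^ 2 := by gcongr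
      linarith
    · push Not at hx0
      have hp : 0 < 2 * π / b := by positivity
      have h3 : -x ≤ (b⁻¹) ^ 2 * (π ^ 2 / 3) := by
        have : (b⁻¹) ^ 2 * y ≤ (b⁻¹) ^ 2 * (π ^ 2 / 3) := by gcongr
        rw [h1]; linarith
      have h4 : (-x) ^ 2 ≤ ((b⁻¹) ^ 2 * (π ^ 2 / 3)) ^ 2 :=
        pow_le_pow_left₀ (by linarith) h3 2
      have h5 : (b⁻¹) ^ 4 * (12 * (π ^ 2 / 3) ^ 2) < (b⁻¹) ^ 4 * v := by gcongr
      nlinarith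
  have hc : (u : ℂ) - 12 * (x : ℂ) ^ 2 = ((u - 12 * x ^ 2 : ℝ) : ℂ) := by push_cast; ring
  rw [hc]
  exact ⟨Complex.ofReal_im _, by rw [Complex.ofReal_re]; exact hmain⟩
end
end

section
/- The Eisenstein series E₂ satisfies E₂((aτ+b)/(cτ+d)) = (cτ+d)² E₂(τ) - (6ic/π)(cτ+d) for every (a b; c d) ∈ SL(2,ℤ) and every τ in the upper half-plane. -/
noncomputable section
open scoped Real MatrixGroups
open Complex

/-- The normalized weight-2 Eisenstein series
`E₂(τ) = 1 - 24 ∑_{n≥1} σ₁(n) e^{2πinτ}`. -/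
def E2 (τ : ℂ) : ℂ :=
  1 - 24 * ∑' n : ℕ, ((∑ d ∈ (n + 1).divisors, d : ℕ) : ℂ) *
    Complex.exp (2 * (π : ℂ) * Complex.I * (n + 1) * τ)

/-- The series `E2` agrees with the Mathlib Eisenstein series of weight two. -/
lemma E2_eq_mathlib (z : UpperHalfPlane) : E2 (z : ℂ) = EisensteinSeries.E2 z := by
  rw [EisensteinSeries.E2_eq_tsum_cexp, E2,
    tsum_pnat_eq_tsum_succ (f := fun n : ℕ => ((ArithmeticFunction.sigma 1 n : ℕ) : ℂ) *
      Complex.exp (2 * (π : ℂ) * Complex.I * (z : ℂ)) ^ n)]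
  congr 2
  refine tsum_congr fun n => ?_
  rw [ArithmeticFunction.sigma_one_apply, ← Complex.exp_nat_mul]
  congr 2
  push_cast
  ring

/-- `E₂((aτ+b)/(cτ+d)) = (cτ+d)² E₂(τ) - (6ic/π)(cτ+d)` for every
`(a b; c d) ∈ SL(2,ℤ)` and every `τ` in the upper half-plane. -/
theorem stmt_14 (γ : SL(2, ℤ)) (τ : ℂ) (hτ : 0 < τ.im) :
    E2 ((((γ 0 0 : ℤ) : ℂ) * τ + ((γ 0 1 : ℤ) : ℂ)) /
        (((γ 1 0 : ℤ) : ℂ) * τ + ((γ 1 1 : ℤ) : ℂ))) =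
      (((γ 1 0 : ℤ) : ℂ) * τ + ((γ 1 1 : ℤ) : ℂ)) ^ 2 * E2 τ -
        6 * Complex.I * ((γ 1 0 : ℤ) : ℂ) / (π : ℂ) *
          (((γ 1 0 : ℤ) : ℂ) * τ + ((γ 1 1 : ℤ) : ℂ)) := by
  have h := congrFun (EisensteinSeries.E2_slash_action γ) ⟨τ, hτ⟩
  rw [ModularForm.SL_slash_apply] at h
  have hd : UpperHalfPlane.denom γ (⟨τ, hτ⟩ : UpperHalfPlane) =
      ((γ 1 0 : ℤ) : ℂ) * τ + ((γ 1 1 : ℤ) : ℂ) := by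
    rw [ModularGroup.denom_apply]
  have hne := UpperHalfPlane.denom_ne_zero γ (⟨τ, hτ⟩ : UpperHalfPlane)
  have hact : ((γ • (⟨τ, hτ⟩ : UpperHalfPlane) : UpperHalfPlane) : ℂ) =
      (((γ 0 0 : ℤ) : ℂ) * τ + ((γ 0 1 : ℤ) : ℂ)) /
        (((γ 1 0 : ℤ) : ℂ) * τ + ((γ 1 1 : ℤ) : ℂ)) := by
    rw [UpperHalfPlane.coe_specialLinearGroup_apply]
    simp
  simp only [Pi.sub_apply, Pi.smul_apply, smul_eq_mul, EisensteinSeries.D2,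
    ← E2_eq_mathlib, riemannZeta_two] at h
  rw [hact, hd] at h
  rw [hd] at hne
  set w := ((γ 1 0 : ℤ) : ℂ) * τ + ((γ 1 1 : ℤ) : ℂ) with hw
  have hpi : (π : ℂ) ≠ 0 := by exact_mod_cast Real.pi_ne_zero
  rw [zpow_neg, ← div_eq_mul_inv, div_eq_iff (zpow_ne_zero _ hne)] at h
  rw [h]
  rw [zpow_ofNat]
  field_simp
end
end
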